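/- Let α ∈ (0,1/24). There exists δ ∈ (0,1), depending only on α, with the following property: for every x = (x1,x2) in the closure of D⁺ with x1 ≤ x2 ≤ δ and every measurable ω : ℝ×(0,∞) → ℝ which is odd in x1 and satisfies χ_{A(x)} ≤ ω ≤ 1 on D⁺, one has u2(x) := ∫_{D⁺} K2(x,y) ω(y) dy ≥ (1/(50α))·x2^{1−2α}. -/

import Mathlib

open MeasureTheory

noncomputable section

/-- Euclidean distance between points of `ℝ²` written as pairs. -/
def edist2 (p q : ℝ × ℝ) : ℝ := Real.sqrt ((p.1 - q.1) ^ 2 + (p.2 - q.2) ^ 2)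

/-- The open quadrant `D⁺ = (0,∞) × (0,∞)`. -/
def Dplus : Set (ℝ × ℝ) := Set.Ioi 0 ×ˢ Set.Ioi 0

/-- `K1(x,y) = (y₂-x₂)/|x-y|^{2+2α} - (y₂-x₂)/|x-ỹ|^{2+2α}
  - (y₂+x₂)/|x+y|^{2+2α} + (y₂+x₂)/|x-ȳ|^{2+2α}`, where `ỹ = (-y₁,y₂)`, `ȳ = (y₁,-y₂)`. -/
def K1 (α : ℝ) (x y : ℝ × ℝ) : ℝ :=
  (y.2 - x.2) / edist2 x y ^ (2 + 2 * α)
  - (y.2 - x.2) / edist2 x (-y.1, y.2) ^ (2 + 2 * α)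
  - (y.2 + x.2) / edist2 x (-y.1, -y.2) ^ (2 + 2 * α)
  + (y.2 + x.2) / edist2 x (y.1, -y.2) ^ (2 + 2 * α)

/-- `K2(x,y) = (y₁-x₁)/|x-y|^{2+2α} + (y₁+x₁)/|x-ỹ|^{2+2α}
  - (y₁+x₁)/|x+y|^{2+2α} - (y₁-x₁)/|x-ȳ|^{2+2α}`, where `ỹ = (-y₁,y₂)`, `ȳ = (y₁,-y₂)`. -/
def K2 (α : ℝ) (x y : ℝ × ℝ) : ℝ :=
  (y.1 - x.1) / edist2 x y ^ (2 + 2 * α)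
  + (y.1 + x.1) / edist2 x (-y.1, y.2) ^ (2 + 2 * α)
  - (y.1 + x.1) / edist2 x (-y.1, -y.2) ^ (2 + 2 * α)
  - (y.1 - x.1) / edist2 x (y.1, -y.2) ^ (2 + 2 * α)

/-- The triangle `A(x) = {y : x₁ < y₁ < x₁+1, x₂ < y₂ < x₂ + (y₁ - x₁)}`. -/
def Atri (x : ℝ × ℝ) : Set (ℝ × ℝ) :=
  {y : ℝ × ℝ | x.1 < y.1 ∧ y.1 < x.1 + 1 ∧ x.2 < y.2 ∧ y.2 < x.2 + (y.1 - x.1)}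

/-- The profile `(t² + h²)^{-(1+α)}`, i.e. `|(t,h)|^{-(2+2α)}`. -/
def radialPow (α t h : ℝ) : ℝ := (t ^ 2 + h ^ 2) ^ (-(1 + α))

/-- A source at `(c, s)` together with its mirror image at `(c, -s)`; the kernel `K2` is the sum of
two of these. -/
def mirrorKernel (α c s : ℝ) (y : ℝ × ℝ) : ℝ :=
  (y.1 - c) * (radialPow α (y.1 - c) (y.2 - s) - radialPow α (y.1 - c) (y.2 + s))

lemma edist2_rpow (α : ℝ) (p q : ℝ × ℝ) :
    edist2 p q ^ (2 + 2 * α) = ((p.1 - q.1) ^ 2 + (p.2 - q.2) ^ 2) ^ (1 + α) := by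
  rw [edist2, Real.sqrt_eq_rpow, ← Real.rpow_mul (by positivity)]
  congr 1
  ring

lemma K2_eq_mirrorKernel_add (α : ℝ) (x y : ℝ × ℝ) :
    K2 α x y = mirrorKernel α x.1 x.2 y + mirrorKernel α (-x.1) x.2 y := by
  have key (A t h t' h' : ℝ) (h1 : t ^ 2 = t' ^ 2) (h2 : h ^ 2 = h' ^ 2) :
      A / (t ^ 2 + h ^ 2) ^ (1 + α) = A * radialPow α t' h' := by
    rw [radialPow, h1, h2, Real.rpow_neg (by positivity), div_eq_mul_inv]
  simp only [K2, edist2_rpow, mirrorKernel]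
  rw [key _ _ _ (y.1 - x.1) (y.2 - x.2) (by ring) (by ring),
    key _ _ _ (y.1 - -x.1) (y.2 - x.2) (by ring) (by ring),
    key _ _ _ (y.1 - -x.1) (y.2 + x.2) (by ring) (by ring),
    key _ _ _ (y.1 - x.1) (y.2 + x.2) (by ring) (by ring)]
  ring

lemma radialPow_nonneg (α t h : ℝ) : 0 ≤ radialPow α t h := by
  unfold radialPow; positivity

lemma radialPow_anti {α t h h' : ℝ} (hα : 0 < α) (ht : 0 < t) (hh : h ^ 2 ≤ h' ^ 2) :
    radialPow α t h' ≤ radialPow α t h := by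
  unfold radialPow
  exact Real.rpow_le_rpow_of_nonpos (by positivity) (by linarith) (by linarith)

lemma sq_rpow_neg {α t : ℝ} (ht : 0 < t) : (t ^ 2) ^ (-(1 + α)) = t ^ (-2 - 2 * α) := by
  rw [← Real.rpow_natCast, ← Real.rpow_mul ht.le]
  congr 1
  push_cast
  ring

lemma radialPow_le_rpow {α t : ℝ} (hα : 0 < α) (ht : 0 < t) (h : ℝ) :
    radialPow α t h ≤ t ^ (-2 - 2 * α) := by
  refine (radialPow_anti (h := 0) hα ht (by nlinarith [sq_nonneg h])).trans_eq ?_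
  simp [radialPow, ← sq_rpow_neg ht]

lemma radialPow_le_inv {α t : ℝ} (hα : 0 < α) (ht : 0 < t) (h : ℝ) :
    radialPow α t h ≤ t ^ (-2 * α) * (t ^ 2 + h ^ 2)⁻¹ := by
  have hp : 0 < t ^ 2 + h ^ 2 := by positivity
  have e : radialPow α t h = (t ^ 2 + h ^ 2) ^ (-α) * (t ^ 2 + h ^ 2)⁻¹ := by
    rw [radialPow, ← Real.rpow_neg_one, ← Real.rpow_add hp]
    congr 1
    ring
  have e2 : t ^ (-2 * α) = (t ^ 2) ^ (-α) := by
    rw [← Real.rpow_natCast, ← Real.rpow_mul ht.le]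
    congr 1
    push_cast
    ring
  rw [e, e2]
  gcongr ?_ * _
  exact Real.rpow_le_rpow_of_nonpos (by positivity) (by nlinarith [sq_nonneg h]) (by linarith)

lemma continuous_radialPow (α : ℝ) {t : ℝ} (ht : 0 < t) : Continuous (radialPow α t) := by
  unfold radialPow
  refine Continuous.rpow_const (by fun_prop) fun h => Or.inl ?_
  positivity

lemma inv_sq_add_sq_eq {t : ℝ} (ht : 0 < t) (h : ℝ) :
    (t ^ 2 + h ^ 2)⁻¹ = (t ^ 2)⁻¹ * (1 + (h / t) ^ 2)⁻¹ := by
  rw [← mul_inv]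
  congr 1
  field_simp

lemma integrable_inv_sq_add_sq {t : ℝ} (ht : 0 < t) :
    Integrable fun h : ℝ => (t ^ 2 + h ^ 2)⁻¹ := by
  simp_rw [inv_sq_add_sq_eq ht]
  exact (integrable_inv_one_add_sq.comp_div ht.ne').const_mul _

lemma integral_univ_inv_sq_add_sq {t : ℝ} (ht : 0 < t) :
    ∫ h : ℝ, (t ^ 2 + h ^ 2)⁻¹ = Real.pi / t := by
  simp_rw [inv_sq_add_sq_eq ht]
  rw [integral_const_mul, Measure.integral_comp_div (fun x => (1 + x ^ 2)⁻¹),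
    integral_univ_inv_one_add_sq, abs_of_pos ht, smul_eq_mul]
  field_simp

lemma integrable_radialPow {α t : ℝ} (hα : 0 < α) (ht : 0 < t) : Integrable (radialPow α t) := by
  refine ((integrable_inv_sq_add_sq ht).const_mul (t ^ (-2 * α))).mono'
    (continuous_radialPow α ht).aestronglyMeasurable (.of_forall fun h => ?_)
  rw [Real.norm_of_nonneg (radialPow_nonneg _ _ _)]
  exact radialPow_le_inv hα ht h

lemma integral_radialPow_le_pi {α t s : ℝ} (hα : 0 < α) (ht : 0 < t) (hs : 0 ≤ s) :
    t * ∫ h in -s..s, radialPow α t h ≤ Real.pi * t ^ (-2 * α) := by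
  have h1 : ∫ h in -s..s, radialPow α t h ≤ ∫ h, radialPow α t h := by
    rw [intervalIntegral.integral_of_le (by linarith)]
    exact setIntegral_le_integral (integrable_radialPow hα ht)
      (.of_forall fun h => radialPow_nonneg _ _ _)
  have h2 : ∫ h, radialPow α t h ≤ t ^ (-2 * α) * (Real.pi / t) := by
    rw [← integral_univ_inv_sq_add_sq ht, ← integral_const_mul]
    exact integral_mono (integrable_radialPow hα ht)
      ((integrable_inv_sq_add_sq ht).const_mul _) fun h => radialPow_le_inv hα ht h
  calc t * ∫ h in -s..s, radialPow α t h ≤ t * (t ^ (-2 * α) * (Real.pi / t)) := by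
        gcongr
        exact h1.trans h2
    _ = Real.pi * t ^ (-2 * α) := by field_simp

lemma integral_radialPow_le_rpow {α t s : ℝ} (hα : 0 < α) (ht : 0 < t) (hs : 0 ≤ s) :
    t * ∫ h in -s..s, radialPow α t h ≤ 2 * s * t ^ (-1 - 2 * α) := by
  have h1 : ∫ h in -s..s, radialPow α t h ≤ ∫ _ in -s..s, t ^ (-2 - 2 * α) :=
    intervalIntegral.integral_mono_on (by linarith)
      ((continuous_radialPow α ht).intervalIntegrable _ _)
      intervalIntegrable_const fun h _ => radialPow_le_rpow hα ht h
  have e : t * t ^ (-2 - 2 * α) = t ^ (-1 - 2 * α) := by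
    rw [← Real.rpow_one_add' ht.le (by linarith)]
    congr 1
    ring
  rw [intervalIntegral.integral_const, smul_eq_mul] at h1
  rw [← e]
  nlinarith [mul_le_mul_of_nonneg_left h1 ht.le]

lemma setIntegral_Ioi_comp_add (f : ℝ → ℝ) (d c : ℝ) :
    ∫ y in Set.Ioi d, f (y + c) = ∫ y in Set.Ioi (d + c), f y := by
  have := (measurePreserving_add_right volume c).setIntegral_preimage_emb
    (measurableEmbedding_addRight c) f (Set.Ioi (d + c))
  simpa using this

lemma integrable_radialPow_sub {α t : ℝ} (hα : 0 < α) (ht : 0 < t) (s : ℝ) :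
    Integrable fun y => radialPow α t (y - s) - radialPow α t (y + s) :=
  ((integrable_radialPow hα ht).comp_sub_right s).sub ((integrable_radialPow hα ht).comp_add_right s)

lemma integral_radialPow_sub {α t s : ℝ} (hα : 0 < α) (ht : 0 < t) (hs : 0 ≤ s) :
    ∫ y in Set.Ioi 0, (radialPow α t (y - s) - radialPow α t (y + s)) =
      ∫ h in -s..s, radialPow α t h := by
  have hi := integrable_radialPow hα ht
  rw [integral_sub (hi.comp_sub_right s).integrableOn (hi.comp_add_right s).integrableOn]
  simp_rw [sub_eq_add_neg _ s]
  rw [setIntegral_Ioi_comp_add, setIntegral_Ioi_comp_add, zero_add, zero_add]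
  exact intervalIntegral.integral_Ioi_sub_Ioi hi.integrableOn (by linarith)

lemma radialPow_sub_nonneg {α t s y : ℝ} (hα : 0 < α) (ht : 0 < t) (hs : 0 ≤ s) (hy : 0 < y) :
    0 ≤ radialPow α t (y - s) - radialPow α t (y + s) :=
  sub_nonneg.2 (radialPow_anti hα ht (by nlinarith))

lemma mirrorKernel_nonneg {α c s : ℝ} {y : ℝ × ℝ} (hα : 0 < α) (hs : 0 ≤ s) (hc : c ≤ y.1)
    (hy : 0 < y.2) : 0 ≤ mirrorKernel α c s y := by
  rcases hc.eq_or_lt with rfl | hc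
  · simp [mirrorKernel]
  · exact mul_nonneg (by linarith) (radialPow_sub_nonneg hα (by linarith) hs hy)

lemma norm_mirrorKernel {α c s : ℝ} {y : ℝ × ℝ} (hα : 0 < α) (hs : 0 ≤ s) (hc : y.1 ≠ c)
    (hy : 0 < y.2) : ‖mirrorKernel α c s y‖ =
      |y.1 - c| * (radialPow α |y.1 - c| (y.2 - s) - radialPow α |y.1 - c| (y.2 + s)) := by
  have hpos : 0 < |y.1 - c| := abs_pos.2 (sub_ne_zero.2 hc)
  have e (h : ℝ) : radialPow α (y.1 - c) h = radialPow α |y.1 - c| h := by simp [radialPow]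
  rw [mirrorKernel, norm_mul, e, e, Real.norm_of_nonneg (radialPow_sub_nonneg hα hpos hs hy),
    Real.norm_eq_abs]

lemma integral_norm_mirrorKernel {α c s y₁ : ℝ} (hα : 0 < α) (hs : 0 ≤ s) (hc : y₁ ≠ c) :
    ∫ y₂ in Set.Ioi 0, ‖mirrorKernel α c s (y₁, y₂)‖ =
      |y₁ - c| * ∫ h in -s..s, radialPow α |y₁ - c| h := by
  have hpos : 0 < |y₁ - c| := abs_pos.2 (sub_ne_zero.2 hc)
  rw [← integral_radialPow_sub hα hpos hs, ← integral_const_mul]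
  exact setIntegral_congr_fun measurableSet_Ioi fun y₂ hy₂ =>
    norm_mirrorKernel (y := (y₁, y₂)) hα hs hc hy₂

lemma integrable_mirrorKernel_right {α c s : ℝ} (hα : 0 < α) (y₁ : ℝ) :
    Integrable fun y₂ => mirrorKernel α c s (y₁, y₂) := by
  rcases eq_or_ne y₁ c with rfl | hc
  · simp [mirrorKernel]
  have hpos : 0 < |y₁ - c| := abs_pos.2 (sub_ne_zero.2 hc)
  have e (h : ℝ) : radialPow α (y₁ - c) h = radialPow α |y₁ - c| h := by simp [radialPow]
  simp only [mirrorKernel, e]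
  exact (integrable_radialPow_sub hα hpos s).const_mul _

/-- Integrable majorant, as a function of the horizontal distance, of the vertical integral of
the mirror kernel. -/
def marginalBound (α s t : ℝ) : ℝ :=
  (Set.Ioc 0 1).indicator (fun t => Real.pi * t ^ (-2 * α)) t +
    (Set.Ioi 1).indicator (fun t => 2 * s * t ^ (-1 - 2 * α)) t

lemma integrable_marginalBound {α : ℝ} (hα : 0 < α) (hα' : α < 1 / 2) (s : ℝ) :
    Integrable (marginalBound α s) := by
  refine Integrable.add (IntegrableOn.integrable_indicator ?_ measurableSet_Ioc)
    (IntegrableOn.integrable_indicator ?_ measurableSet_Ioi)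
  · refine Integrable.const_mul ?_ _
    have := intervalIntegral.intervalIntegrable_rpow' (a := 0) (b := 1) (r := -2 * α) (by linarith)
    rwa [intervalIntegrable_iff_integrableOn_Ioc_of_le zero_le_one] at this
  · exact Integrable.const_mul (integrableOn_Ioi_rpow_of_lt (by linarith) one_pos) _

lemma marginalBound_nonneg {α s : ℝ} (hs : 0 ≤ s) (t : ℝ) : 0 ≤ marginalBound α s t := by
  refine add_nonneg (Set.indicator_nonneg (fun t ht => ?_) _)
    (Set.indicator_nonneg (fun t ht => ?_) _)
  · have := ht.1
    positivity
  · have : (0 : ℝ) < t := one_pos.trans ht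
    positivity

lemma integral_radialPow_le_marginalBound {α t s : ℝ} (hα : 0 < α) (ht : 0 < t) (hs : 0 ≤ s) :
    t * ∫ h in -s..s, radialPow α t h ≤ marginalBound α s t := by
  rcases le_or_gt t 1 with h | h
  · simpa [marginalBound, ht, h] using integral_radialPow_le_pi hα ht hs
  · simpa [marginalBound, ht, h] using integral_radialPow_le_rpow hα ht hs

lemma measurable_mirrorKernel (α c s : ℝ) : Measurable (mirrorKernel α c s) := by
  unfold mirrorKernel radialPow
  fun_prop

lemma integrable_mirrorKernel {α : ℝ} (hα : 0 < α) (hα' : α < 1 / 2) (c : ℝ) {s : ℝ}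
    (hs : 0 ≤ s) :
    Integrable (mirrorKernel α c s)
      ((volume : Measure ℝ).prod ((volume : Measure ℝ).restrict (Set.Ioi 0))) := by
  have hm := (measurable_mirrorKernel α c s).aestronglyMeasurable
    (μ := (volume : Measure ℝ).prod ((volume : Measure ℝ).restrict (Set.Ioi 0)))
  rw [integrable_prod_iff hm]
  refine ⟨.of_forall fun y₁ => (integrable_mirrorKernel_right hα y₁).integrableOn, ?_⟩
  have hb := integrable_marginalBound hα hα' s
  refine ((hb.comp_sub_right c).add (hb.comp_neg.comp_sub_right c)).mono'
    hm.norm.integral_prod_right' (.of_forall fun y₁ => ?_)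
  rw [Real.norm_of_nonneg (integral_nonneg fun _ => norm_nonneg _)]
  simp only [Pi.add_apply]
  have h0 := marginalBound_nonneg (α := α) hs (y₁ - c)
  have h0' := marginalBound_nonneg (α := α) hs (-(y₁ - c))
  rcases lt_trichotomy y₁ c with h | rfl | h
  · rw [integral_norm_mirrorKernel hα hs h.ne, abs_of_neg (by linarith)]
    linarith [integral_radialPow_le_marginalBound hα (t := -(y₁ - c)) (by linarith) hs]
  · simp only [mirrorKernel, sub_self, zero_mul, norm_zero, integral_zero] at *
    linarith
  · rw [integral_norm_mirrorKernel hα hs h.ne', abs_of_pos (by linarith)]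
    linarith [integral_radialPow_le_marginalBound hα (t := y₁ - c) (by linarith) hs]

lemma radialPow_ge_of_le {α t s h : ℝ} (hα : 0 < α) (hα' : α < 1 / 24) (hs : 0 < s)
    (hst : 4 * s ≤ t) (h0 : 0 ≤ h) (h1 : h ≤ 2 * s) :
    39 / 50 * t ^ (-2 - 2 * α) ≤ radialPow α t h := by
  have ht : 0 < t := by linarith
  have hle : t ^ 2 + h ^ 2 ≤ 5 / 4 * t ^ 2 := by nlinarith
  have hnum : 39 / 50 ≤ (5 / 4 : ℝ) ^ (-(1 + α)) := by
    have hb : (1 + 1 / 4 : ℝ) ^ α ≤ 1 + α * (1 / 4) :=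
      rpow_one_add_le_one_add_mul_self (by norm_num) hα.le (by linarith)
    have hc : (5 / 4 : ℝ) ^ (1 + α) ≤ 50 / 39 := by
      rw [Real.rpow_add (by norm_num), Real.rpow_one]
      norm_num at hb ⊢
      linarith
    rw [Real.rpow_neg (by norm_num), le_inv_comm₀ (by norm_num) (by positivity)]
    linarith
  calc 39 / 50 * t ^ (-2 - 2 * α) ≤ (5 / 4 : ℝ) ^ (-(1 + α)) * t ^ (-2 - 2 * α) := by gcongr
    _ = (5 / 4 * t ^ 2) ^ (-(1 + α)) := by
        rw [Real.mul_rpow (by norm_num) (by positivity), sq_rpow_neg ht]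
    _ ≤ radialPow α t h :=
        Real.rpow_le_rpow_of_nonpos (by positivity) hle (by linarith)

lemma radialPow_le_of_ge {α t h : ℝ} (hα : 0 < α) (ht : 0 < t) (hh : t ≤ h) :
    radialPow α t h ≤ 1 / 2 * t ^ (-2 - 2 * α) := by
  have hnum : (2 : ℝ) ^ (-(1 + α)) ≤ 1 / 2 := by
    calc (2 : ℝ) ^ (-(1 + α)) ≤ 2 ^ (-1 : ℝ) :=
          Real.rpow_le_rpow_of_exponent_le (by norm_num) (by linarith)
      _ = 1 / 2 := by norm_num [Real.rpow_neg_one]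
  calc radialPow α t h ≤ (2 * t ^ 2) ^ (-(1 + α)) :=
        Real.rpow_le_rpow_of_nonpos (by positivity) (by nlinarith) (by linarith)
    _ = (2 : ℝ) ^ (-(1 + α)) * t ^ (-2 - 2 * α) := by
        rw [Real.mul_rpow (by norm_num) (by positivity), sq_rpow_neg ht]
    _ ≤ 1 / 2 * t ^ (-2 - 2 * α) := by gcongr

/-- Lower bound for the integral of the mirror kernel along a vertical segment of the triangle. -/
lemma integral_mirrorKernel_segment_ge {α c s y₁ : ℝ} (hα : 0 < α) (hα' : α < 1 / 24) (hs : 0 < s)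
    (hy : 4 * s ≤ y₁ - c) :
    14 / 25 * s * (y₁ - c) ^ (-1 - 2 * α) ≤
      ∫ y₂ in Set.Ioo s (s + (y₁ - c)), mirrorKernel α c s (y₁, y₂) := by
  simp only [mirrorKernel]
  set t := y₁ - c
  have ht : 0 < t := by linarith
  have hc := continuous_radialPow α ht
  have hii (a b : ℝ) : IntervalIntegrable (radialPow α t) volume a b := hc.intervalIntegrable a b
  have e : t * t ^ (-2 - 2 * α) = t ^ (-1 - 2 * α) := by
    rw [← Real.rpow_one_add' ht.le (by linarith)]
    congr 1
    ring
  rw [← integral_Ioc_eq_integral_Ioo, ← intervalIntegral.integral_of_le (by linarith),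
    intervalIntegral.integral_const_mul, intervalIntegral.integral_sub
      ((by fun_prop : Continuous fun y => radialPow α t (y - s)).intervalIntegrable _ _)
      ((by fun_prop : Continuous fun y => radialPow α t (y + s)).intervalIntegrable _ _),
    intervalIntegral.integral_comp_sub_right, intervalIntegral.integral_comp_add_right,
    intervalIntegral.integral_interval_sub_interval_comm (hii _ _) (hii _ _) (hii _ _)]
  have h1 : ∫ _ in (s - s)..(s + s), 39 / 50 * t ^ (-2 - 2 * α) ≤
      ∫ h in (s - s)..(s + s), radialPow α t h :=
    intervalIntegral.integral_mono_on (by linarith) intervalIntegrable_const (hii _ _)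
      fun h hh => radialPow_ge_of_le hα hα' hs hy (by linarith [hh.1]) (by linarith [hh.2])
  have h2 : ∫ h in (s + t - s)..(s + t + s), radialPow α t h ≤
      ∫ _ in (s + t - s)..(s + t + s), 1 / 2 * t ^ (-2 - 2 * α) :=
    intervalIntegral.integral_mono_on (by linarith) (hii _ _) intervalIntegrable_const
      fun h hh => radialPow_le_of_ge hα ht (by linarith [hh.1])
  rw [intervalIntegral.integral_const, smul_eq_mul] at h1 h2
  rw [← e]
  nlinarith [mul_le_mul_of_nonneg_left (sub_le_sub h1 h2) ht.le]

/-- Lower bound for the vertical integrals of `K2 α (a, s) * ω`. -/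
def marginalLower (α a s y₁ : ℝ) : ℝ :=
  (Set.Ioo (a + 4 * s) (a + 1)).indicator
      (fun y₁ => 14 / 25 * s * (y₁ - a) ^ (-1 - 2 * α)) y₁ -
    (Set.Ioo 0 a).indicator (fun y₁ => Real.pi * (a - y₁) ^ (-2 * α)) y₁

lemma marginalLower_le_integral {α : ℝ} (hα : 0 < α) (hα' : α < 1 / 24) {x : ℝ × ℝ}
    (h1 : 0 ≤ x.1) (h2 : 0 < x.2) {ω : ℝ × ℝ → ℝ}
    (hω : ∀ y ∈ Dplus, (Atri x).indicator (fun _ => (1 : ℝ)) y ≤ ω y ∧ ω y ≤ 1)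
    {y₁ : ℝ} (hy₁ : 0 < y₁)
    (hint : IntegrableOn (fun y₂ => K2 α x (y₁, y₂) * ω (y₁, y₂)) (Set.Ioi 0)) :
    marginalLower α x.1 x.2 y₁ ≤ ∫ y₂ in Set.Ioi 0, K2 α x (y₁, y₂) * ω (y₁, y₂) := by
  have hω0 (y₂ : ℝ) (hy₂ : 0 < y₂) : 0 ≤ ω (y₁, y₂) :=
    (Set.indicator_nonneg (fun _ _ => zero_le_one) _).trans (hω (y₁, y₂) ⟨hy₁, hy₂⟩).1
  have hω1 (y₂ : ℝ) (hy₂ : 0 < y₂) : ω (y₁, y₂) ≤ 1 := (hω (y₁, y₂) ⟨hy₁, hy₂⟩).2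
  have hsecond (y₂ : ℝ) (hy₂ : 0 < y₂) : 0 ≤ mirrorKernel α (-x.1) x.2 (y₁, y₂) :=
    mirrorKernel_nonneg hα h2.le (by simp only; linarith) hy₂
  rcases lt_or_ge y₁ x.1 with hlt | hge
  · have e : marginalLower α x.1 x.2 y₁ = -(Real.pi * (x.1 - y₁) ^ (-2 * α)) := by
      rw [marginalLower, Set.indicator_of_notMem (fun h => by linarith [h.1]),
        Set.indicator_of_mem (Set.mem_Ioo.2 ⟨hy₁, hlt⟩), zero_sub]
    have hb := integral_radialPow_le_pi hα (t := x.1 - y₁) (by linarith) h2.le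
    have hI := integral_norm_mirrorKernel hα h2.le hlt.ne
    rw [abs_sub_comm, abs_of_pos (by linarith)] at hI
    rw [e]
    refine (neg_le_neg (hI.trans_le hb)).trans ?_
    rw [← integral_neg]
    refine setIntegral_mono_on (integrable_mirrorKernel_right hα y₁).norm.neg.integrableOn hint
      measurableSet_Ioi fun y₂ hy₂ => ?_
    have ha := neg_abs_le (mirrorKernel α x.1 x.2 (y₁, y₂))
    have hn := abs_nonneg (mirrorKernel α x.1 x.2 (y₁, y₂))
    rw [K2_eq_mirrorKernel_add, Real.norm_eq_abs]
    nlinarith [mul_nonneg (hsecond y₂ hy₂) (hω0 y₂ hy₂), hω0 y₂ hy₂, hω1 y₂ hy₂,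
      mul_le_mul_of_nonneg_right ha (hω0 y₂ hy₂), mul_le_mul_of_nonneg_left (hω1 y₂ hy₂) hn]
  have hfirst (y₂ : ℝ) (hy₂ : 0 < y₂) : 0 ≤ mirrorKernel α x.1 x.2 (y₁, y₂) :=
    mirrorKernel_nonneg hα h2.le hge hy₂
  rw [marginalLower, Set.indicator_of_notMem (s := Set.Ioo 0 x.1) (fun h => by linarith [h.2]),
    sub_zero]
  have hnonneg (y₂ : ℝ) (hy₂ : 0 < y₂) : 0 ≤ K2 α x (y₁, y₂) * ω (y₁, y₂) := by
    rw [K2_eq_mirrorKernel_add]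
    exact mul_nonneg (add_nonneg (hfirst y₂ hy₂) (hsecond y₂ hy₂)) (hω0 y₂ hy₂)
  by_cases hmem : y₁ ∈ Set.Ioo (x.1 + 4 * x.2) (x.1 + 1)
  · rw [Set.indicator_of_mem hmem]
    have hsub : Set.Ioo x.2 (x.2 + (y₁ - x.1)) ⊆ Set.Ioi 0 := fun y₂ hy₂ => h2.trans hy₂.1
    calc _ ≤ ∫ y₂ in Set.Ioo x.2 (x.2 + (y₁ - x.1)), mirrorKernel α x.1 x.2 (y₁, y₂) :=
          integral_mirrorKernel_segment_ge hα hα' h2 (by linarith [hmem.1])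
      _ ≤ ∫ y₂ in Set.Ioo x.2 (x.2 + (y₁ - x.1)), K2 α x (y₁, y₂) * ω (y₁, y₂) := by
          refine setIntegral_mono_on (integrable_mirrorKernel_right hα y₁).integrableOn
            (hint.mono_set hsub) measurableSet_Ioo fun y₂ hy₂ => ?_
          have hy₂0 : 0 < y₂ := hsub hy₂
          have hone : ω (y₁, y₂) = 1 := by
            refine le_antisymm (hω1 y₂ hy₂0) ?_
            have hA : (y₁, y₂) ∈ Atri x := ⟨by simp only; linarith [hmem.1], hmem.2, hy₂⟩
            simpa [hA] using (hω (y₁, y₂) ⟨hy₁, hy₂0⟩).1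
          rw [hone, mul_one, K2_eq_mirrorKernel_add]
          linarith [hsecond y₂ hy₂0]
      _ ≤ _ := setIntegral_mono_set hint
          ((ae_restrict_iff' measurableSet_Ioi).2 (.of_forall hnonneg)) hsub.eventuallyLE
  · rw [Set.indicator_of_notMem hmem]
    exact setIntegral_nonneg measurableSet_Ioi hnonneg

lemma integrable_K2_mul {α : ℝ} (hα : 0 < α) (hα' : α < 1 / 2) {x : ℝ × ℝ} (h2 : 0 ≤ x.2)
    {ω : ℝ × ℝ → ℝ} (hm : Measurable ω) (hω : ∀ y ∈ Dplus, ‖ω y‖ ≤ 1) :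
    IntegrableOn (fun y => K2 α x y * ω y) Dplus := by
  have hK : IntegrableOn (K2 α x) Dplus := by
    have h := (integrable_mirrorKernel hα hα' x.1 h2).add
      (integrable_mirrorKernel hα hα' (-x.1) h2)
    have e : K2 α x = mirrorKernel α x.1 x.2 + mirrorKernel α (-x.1) x.2 :=
      funext (K2_eq_mirrorKernel_add α x)
    rw [← e] at h
    refine Integrable.mono_measure h ?_
    rw [Dplus, Measure.volume_eq_prod, ← Measure.prod_restrict]
    exact Measure.prod_mono Measure.restrict_le_self le_rfl
  refine Integrable.mono hK (hK.aestronglyMeasurable.mul hm.aestronglyMeasurable) ?_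
  refine (ae_restrict_iff' (measurableSet_Ioi.prod measurableSet_Ioi)).2 (.of_forall fun y hy => ?_)
  rw [norm_mul]
  exact mul_le_of_le_one_right (norm_nonneg _) (hω y hy)

lemma zero_notMem_uIcc {b : ℝ} (hb : 0 < b) : (0 : ℝ) ∉ Set.uIcc b 1 := by
  rw [Set.mem_uIcc]
  rintro (h | h) <;> linarith [h.1, h.2]

lemma integrableOn_sub_rpow (α a : ℝ) {s : ℝ} (hs : 0 < s) (hs1 : 4 * s ≤ 1) :
    IntegrableOn (fun y => 14 / 25 * s * (y - a) ^ (-1 - 2 * α))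
      (Set.Ioo (a + 4 * s) (a + 1)) := by
  have h := (intervalIntegral.intervalIntegrable_rpow (μ := volume) (r := -1 - 2 * α)
    (Or.inr (zero_notMem_uIcc (by linarith : 0 < 4 * s)))).comp_sub_right a
  rw [add_comm _ a, add_comm _ a,
    intervalIntegrable_iff_integrableOn_Ioo_of_le (by linarith)] at h
  exact h.const_mul _

lemma integrableOn_rpow_sub {α a : ℝ} (hα : α < 1 / 2) (ha : 0 ≤ a) :
    IntegrableOn (fun y => Real.pi * (a - y) ^ (-2 * α)) (Set.Ioo 0 a) := by
  have h := (intervalIntegral.intervalIntegrable_rpow' (a := a) (b := 0) (r := -2 * α)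
    (by linarith)).comp_sub_left a
  rw [sub_self, sub_zero, intervalIntegrable_iff_integrableOn_Ioo_of_le ha] at h
  exact h.const_mul _

lemma integrable_marginalLower {α a s : ℝ} (hα : α < 1 / 2) (ha : 0 ≤ a) (hs : 0 < s)
    (hs1 : 4 * s ≤ 1) : Integrable (marginalLower α a s) :=
  ((integrableOn_sub_rpow α a hs hs1).integrable_indicator measurableSet_Ioo).sub
    ((integrableOn_rpow_sub hα ha).integrable_indicator measurableSet_Ioo)

lemma integral_marginalLower {α a s : ℝ} (hα0 : 0 < α) (hα : α < 1 / 2) (ha : 0 ≤ a) (hs : 0 < s)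
    (hs1 : 4 * s ≤ 1) :
    ∫ y in Set.Ioi 0, marginalLower α a s y =
      14 / 25 * s * (((4 * s) ^ (-(2 * α)) - 1) / (2 * α)) -
        Real.pi * (a ^ (1 - 2 * α) / (1 - 2 * α)) := by
  have hsub₁ : Set.Ioo (a + 4 * s) (a + 1) ⊆ Set.Ioi 0 := fun y hy => by
    have := hy.1
    simp only [Set.mem_Ioi]
    linarith
  have hsub₂ : Set.Ioo 0 a ⊆ Set.Ioi 0 := fun y hy => hy.1
  unfold marginalLower
  rw [integral_sub
      ((integrableOn_sub_rpow α a hs hs1).integrable_indicator measurableSet_Ioo).integrableOn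
      ((integrableOn_rpow_sub hα ha).integrable_indicator measurableSet_Ioo).integrableOn,
    setIntegral_indicator measurableSet_Ioo, setIntegral_indicator measurableSet_Ioo,
    Set.inter_eq_right.2 hsub₁, Set.inter_eq_right.2 hsub₂, integral_const_mul,
    integral_const_mul, ← integral_Ioc_eq_integral_Ioo, ← integral_Ioc_eq_integral_Ioo,
    ← intervalIntegral.integral_of_le (by linarith), ← intervalIntegral.integral_of_le ha,
    intervalIntegral.integral_comp_sub_right (fun y => y ^ (-1 - 2 * α)),
    intervalIntegral.integral_comp_sub_left (fun y => y ^ (-2 * α)),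
    add_sub_cancel_left, add_sub_cancel_left, sub_self, sub_zero,
    integral_rpow (Or.inr ⟨by linarith, zero_notMem_uIcc (by linarith)⟩),
    integral_rpow (Or.inl (by linarith)), Real.zero_rpow (by linarith), Real.one_rpow,
    show -1 - 2 * α + 1 = -(2 * α) by ring, show -2 * α + 1 = 1 - 2 * α by ring, div_neg, ← neg_div,
    neg_sub, sub_zero]

/-- The numerical comparison behind the lower bound. -/
lemma marginalLower_bound {α a s : ℝ} (hα : 0 < α) (hα' : α < 1 / 24) (ha : 0 ≤ a) (has : a ≤ s)
    (hs : 0 < s) (hsα : s ^ (2 * α) ≤ 1 / 100) :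
    1 / (50 * α) * s ^ (1 - 2 * α) ≤ 14 / 25 * s * (((4 * s) ^ (-(2 * α)) - 1) / (2 * α)) -
      Real.pi * (a ^ (1 - 2 * α) / (1 - 2 * α)) := by
  set P := s ^ (1 - 2 * α) with hP
  have hP0 : 0 < P := by positivity
  have haP : a ^ (1 - 2 * α) ≤ P := Real.rpow_le_rpow ha has (by linarith)
  have hsP : s * s ^ (-(2 * α)) = P := by
    rw [hP, ← Real.rpow_one_add' hs.le (by linarith), sub_eq_add_neg]
  have hsP' : s ≤ P * (1 / 100) := by
    have : s = P * s ^ (2 * α) := by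
      rw [hP, ← Real.rpow_add hs, sub_add_cancel, Real.rpow_one]
    calc s = P * s ^ (2 * α) := this
      _ ≤ _ := by gcongr
  have h4 : 4 / 5 ≤ (4 : ℝ) ^ (-(2 * α)) := by
    have hb : (1 + 3 : ℝ) ^ (2 * α) ≤ 1 + 2 * α * 3 :=
      rpow_one_add_le_one_add_mul_self (by norm_num) (by linarith) (by linarith)
    rw [Real.rpow_neg (by norm_num), le_inv_comm₀ (by norm_num) (by positivity)]
    norm_num at hb ⊢
    linarith
  have hmain : 79 / 100 * P ≤ s * ((4 * s) ^ (-(2 * α)) - 1) := by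
    rw [Real.mul_rpow (by norm_num) hs.le]
    have : s * (4 ^ (-(2 * α)) * s ^ (-(2 * α)) - 1) = (4 : ℝ) ^ (-(2 * α)) * P - s := by
      rw [← hsP]
      ring
    nlinarith [mul_le_mul_of_nonneg_right h4 hP0.le]
  have hneg : Real.pi * (a ^ (1 - 2 * α) / (1 - 2 * α)) ≤ 4 * P := by
    have hd : a ^ (1 - 2 * α) / (1 - 2 * α) ≤ P / (11 / 12) := by
      gcongr
      linarith
    have := Real.pi_lt_d2
    calc Real.pi * (a ^ (1 - 2 * α) / (1 - 2 * α)) ≤ 3.15 * (P / (11 / 12)) := by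
          gcongr
          exact div_nonneg (by positivity) (by linarith)
      _ ≤ 4 * P := by linarith
  have hpos : 14 / 25 * (79 / 100 * P) / (2 * α) ≤
      14 / 25 * s * (((4 * s) ^ (-(2 * α)) - 1) / (2 * α)) := by
    rw [mul_div_assoc', mul_assoc]
    gcongr
  have hfin : 1 / (50 * α) * P + 4 * P ≤ 14 / 25 * (79 / 100 * P) / (2 * α) := by
    rw [le_div_iff₀ (by linarith)]
    have : (1 / (50 * α) * P + 4 * P) * (2 * α) = P / 25 + 8 * (α * P) := by
      field_simp
      ring
    nlinarith
  linarith

/-- For `α ∈ (0,1/24)` there is `δ ∈ (0,1)`, depending only on `α`, such that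
for every `x` in the closure of `D⁺` with `x₁ ≤ x₂ ≤ δ` and every measurable `ω`, odd in `x₁`,
with `χ_{A(x)} ≤ ω ≤ 1` on `D⁺`:
`u₂(x) = ∫_{D⁺} K2(x,y) ω(y) dy ≥ (1/(50α))·x₂^{1-2α}`. -/
theorem stmt8 (α : ℝ) (hα : α ∈ Set.Ioo (0 : ℝ) (1/24)) :
    ∃ δ ∈ Set.Ioo (0 : ℝ) 1,
      ∀ x : ℝ × ℝ, x ∈ closure Dplus → x.1 ≤ x.2 → x.2 ≤ δ →
      ∀ ω : ℝ × ℝ → ℝ, Measurable ω →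
        (∀ y : ℝ × ℝ, 0 < y.2 → ω (-y.1, y.2) = -ω (y.1, y.2)) →
        (∀ y ∈ Dplus, (Atri x).indicator (fun _ => (1 : ℝ)) y ≤ ω y ∧ ω y ≤ 1) →
        ∫ y in Dplus, K2 α x y * ω y ≥ 1 / (50 * α) * x.2 ^ (1 - 2 * α) := by
  obtain ⟨hα0, hα1⟩ := hα
  have hδ : ((1 / 100 : ℝ) ^ (1 / (2 * α))) ^ (2 * α) = 1 / 100 := by
    rw [← Real.rpow_mul (by norm_num), one_div_mul_cancel (by positivity), Real.rpow_one]
  have hδ' : (1 / 100 : ℝ) ^ (1 / (2 * α)) ≤ 1 / 100 := by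
    refine Real.rpow_le_self_of_le_one (by norm_num) (by norm_num) ?_
    rw [le_div_iff₀ (by linarith)]
    linarith
  refine ⟨(1 / 100 : ℝ) ^ (1 / (2 * α)), ⟨by positivity, by linarith⟩, ?_⟩
  intro x hx hx12 hxδ ω hm _ hω
  rw [Dplus, closure_prod_eq, closure_Ioi] at hx
  have hx1 : 0 ≤ x.1 := hx.1
  have hx2 : 0 ≤ x.2 := hx.2
  rw [ge_iff_le]
  rcases hx2.eq_or_lt with h0 | hpos
  · have hz (y : ℝ × ℝ) : K2 α x y = 0 := by simp [K2_eq_mirrorKernel_add, mirrorKernel, ← h0]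
    simp only [hz, zero_mul, integral_zero]
    rw [← h0, Real.zero_rpow (by linarith), mul_zero]
  have hsα : x.2 ^ (2 * α) ≤ 1 / 100 :=
    hδ ▸ Real.rpow_le_rpow hx2 hxδ (by linarith)
  have hs1 : 4 * x.2 ≤ 1 := by linarith
  have hωn (y : ℝ × ℝ) (hy : y ∈ Dplus) : ‖ω y‖ ≤ 1 := by
    have h := hω y hy
    rw [Real.norm_of_nonneg ((Set.indicator_nonneg (fun _ _ => zero_le_one) _).trans h.1)]
    exact h.2
  have hint := integrable_K2_mul hα0 (by linarith) hx2 hm hωn (x := x)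
  rw [Dplus, Measure.volume_eq_prod] at hint
  have hint' := hint
  rw [IntegrableOn, ← Measure.prod_restrict] at hint'
  calc _ ≤ _ := marginalLower_bound hα0 hα1 hx1 hx12 hpos hsα
    _ = ∫ y in Set.Ioi 0, marginalLower α x.1 x.2 y :=
        (integral_marginalLower hα0 (by linarith) hx1 hpos hs1).symm
    _ ≤ ∫ y₁ in Set.Ioi 0, ∫ y₂ in Set.Ioi 0, K2 α x (y₁, y₂) * ω (y₁, y₂) := by
        refine integral_mono_ae
          (integrable_marginalLower (by linarith) hx1 hpos hs1).integrableOn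
          hint'.integral_prod_left ?_
        filter_upwards [hint'.prod_right_ae, ae_restrict_mem measurableSet_Ioi] with y₁ hi hy₁
        exact marginalLower_le_integral hα0 hα1 hx1 hpos hω hy₁ hi
    _ = ∫ y in Dplus, K2 α x y * ω y := by
        rw [Dplus, Measure.volume_eq_prod]
        exact (setIntegral_prod _ hint).symm
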